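/- (Invariant 1 of the safety proof: any two decisions within a phase must be on the same value.) Suppose vote : Fin n → Option Bool satisfies the round-1 justification condition: for every replica j and every b : Bool, vote j = some b implies |{k ∈ R j : state k = b}| ≥ ⌊n/2⌋ + 1. If replica i decides b (that is, |{j ∈ R' i : vote j = some b}| ≥ f + 1) and replica i' decides b' (that is, |{j ∈ R' i' : vote j = some b'}| ≥ f + 1), then b = b'. -/

import Mathlib

section

variable {ι α : Type*} [Fintype ι] [DecidableEq α]

theorem eq_of_card_lt_card_filter_add_card_filter {g : ι → α} {s t : Finset ι} {a b : α}
    (h : Fintype.card ι < (s.filter (fun k => g k = a)).card + (t.filter (fun k => g k = b)).card) :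
    a = b := by
  classical
  obtain ⟨k, hk⟩ := Finset.inter_nonempty_of_card_lt_card_add_card
    (Finset.subset_univ _) (Finset.subset_univ _) h
  obtain ⟨hka, hkb⟩ := Finset.mem_inter.mp hk
  exact (Finset.mem_filter.mp hka).2.symm.trans (Finset.mem_filter.mp hkb).2

theorem decisions_agree_within_phase_general {state : ι → α} {R : ι → Finset ι}
    {vote : ι → Option α}
    (hjust : ∀ j b, vote j = some b →
      Fintype.card ι / 2 + 1 ≤ ((R j).filter (fun k => state k = b)).card)
    {Q Q' : Finset ι} {b b' : α}
    (hdec : (Q.filter (fun j => vote j = some b)).Nonempty)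
    (hdec' : (Q'.filter (fun j => vote j = some b')).Nonempty) : b = b' := by
  obtain ⟨j, hj⟩ := hdec
  obtain ⟨j', hj'⟩ := hdec'
  have hmaj := hjust j b (Finset.mem_filter.mp hj).2
  have hmaj' := hjust j' b' (Finset.mem_filter.mp hj').2
  exact eq_of_card_lt_card_filter_add_card_filter (g := state) (s := R j) (t := R j') (by omega)

end

theorem decisions_agree_within_phase
    (n f : ℕ) (state : Fin n → Bool)
    (R R' : Fin n → Finset (Fin n))
    (vote : Fin n → Option Bool)
    (hjust : ∀ j : Fin n, ∀ b : Bool, vote j = some b →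
      ((R j).filter (fun k => state k = b)).card ≥ n / 2 + 1)
    (i i' : Fin n) (b b' : Bool)
    (hdec : ((R' i).filter (fun j => vote j = some b)).card ≥ f + 1)
    (hdec' : ((R' i').filter (fun j => vote j = some b')).card ≥ f + 1) :
    b = b' :=
  decisions_agree_within_phase_general (by simpa only [Fintype.card_fin] using hjust)
    (Finset.card_pos.mp (Nat.zero_lt_of_lt hdec)) (Finset.card_pos.mp (Nat.zero_lt_of_lt hdec'))
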